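/- (Corollary (5.21) of Berndt–Bhargava–Garvan.) For every real p with 0 < p < 1, one has √3 · ₂F₁(1/3, 2/3; 1; 1 − β(p)) = γ(p) · ₂F₁(1/2, 1/2; 1; 1 − α(p)). (For such p both 1 − α(p) and 1 − β(p) lie in (0,1), so both hypergeometric series converge absolutely.) -/

import Mathlib

open Real

/-- Gauss hypergeometric function ₂F₁ defined via its power series
    (the tsum; converges absolutely for |z| < 1). -/
noncomputable def hyp2F1 (a b c z : ℝ) : ℝ :=
  ∑' n : ℕ, ((ascPochhammer ℝ n).eval a * (ascPochhammer ℝ n).eval b /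
      (ascPochhammer ℝ n).eval c) * z ^ n / (Nat.factorial n)

noncomputable def α (p : ℝ) : ℝ := p ^ 3 * (2 + p) / (1 + 2 * p)

noncomputable def β (p : ℝ) : ℝ := 27 * p ^ 2 * (1 + p) ^ 2 / (4 * (1 + p + p ^ 2) ^ 3)

noncomputable def γ (p : ℝ) : ℝ := (1 + p + p ^ 2) / Real.sqrt (1 + 2 * p)

namespace RBBGaux

open Finset

/-- power series with coefficients `c` -/
noncomputable def S (c : ℕ → ℝ) (z : ℝ) : ℝ := ∑' n : ℕ, c n * z ^ n

/-- coefficients of the derivative -/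
noncomputable def Dc (c : ℕ → ℝ) (n : ℕ) : ℝ := ((n : ℝ) + 1) * c (n + 1)

lemma hasSum_congr {f g : ℕ → ℝ} {a : ℝ} (h : ∀ n, f n = g n) : HasSum f a ↔ HasSum g a := by
  rw [funext h]

lemma summ_poly (k : ℕ) {r : ℝ} (h0 : 0 ≤ r) (h1 : r < 1) :
    Summable (fun n : ℕ => ((n : ℝ) + 1) ^ k * r ^ n) := by
  rcases h0.eq_or_lt with rfl | hr
  · refine summable_of_ne_finset_zero (s := {0}) ?_
    intro n hn
    have : n ≠ 0 := by simpa using hn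
    simp [this]
  · have h := summable_pow_mul_geometric_of_norm_lt_one k
      (r := r) (by rw [Real.norm_eq_abs, abs_of_pos hr]; exact h1)
    have h2 := ((summable_nat_add_iff 1).2 h).mul_left (r⁻¹)
    refine h2.congr ?_
    intro n
    push_cast
    field_simp
    ring

lemma summ (c : ℕ → ℝ) (k : ℕ) (hc : ∀ n, |c n| ≤ ((n : ℝ) + 1) ^ k) {z : ℝ} (hz : |z| < 1) :
    Summable (fun n : ℕ => c n * z ^ n) := by
  refine Summable.of_norm_bounded (summ_poly k (abs_nonneg z) hz) ?_
  intro n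
  rw [Real.norm_eq_abs, abs_mul, abs_pow]
  exact mul_le_mul_of_nonneg_right (hc n) (by positivity)

lemma summ_D (c : ℕ → ℝ) {z : ℝ} (h : Summable (fun n : ℕ => Dc c n * z ^ n)) :
    HasSum (fun n : ℕ => (n : ℝ) * c n * z ^ n) (z * S (Dc c) z) := by
  have h1 := h.hasSum.mul_left z
  rw [← hasSum_nat_add_iff' 1]
  simp only [range_one, sum_singleton, Nat.cast_zero, zero_mul, sub_zero]
  refine (hasSum_congr fun n => ?_).1 h1
  simp only [Dc]
  push_cast
  ring

lemma deriv_S (c : ℕ → ℝ) (k k' : ℕ) (hc : ∀ n, |c n| ≤ ((n : ℝ) + 1) ^ k)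
    (hc' : ∀ n, |Dc c n| ≤ ((n : ℝ) + 1) ^ k') {z : ℝ} (hz : |z| < 1) :
    HasDerivAt (S c) (S (Dc c) z) z := by
  obtain ⟨r, hr1, hr2⟩ := exists_between hz
  have hr0 : 0 < r := lt_of_le_of_lt (abs_nonneg z) hr1
  have key := hasDerivAt_tsum_of_isPreconnected
    (u := fun n : ℕ => r⁻¹ * (((n : ℝ) + 1) ^ (k + 1) * r ^ n)) (t := Metric.ball (0 : ℝ) r)
    (g := fun n z => c n * z ^ n) (g' := fun n z => c n * ((n : ℝ) * z ^ (n - 1)))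
    (y₀ := z) (y := z)
    ((summ_poly (k + 1) hr0.le hr2).mul_left _)
    Metric.isOpen_ball (convex_ball 0 r).isPreconnected
    (fun n y _ => (hasDerivAt_pow n y).const_mul (c n)) ?_ (by simpa using hr1)
    (summ c k hc hz) (by simpa using hr1)
  · refine key.congr_deriv ?_
    have h2 : Summable (fun n : ℕ => c n * ((n : ℝ) * z ^ (n - 1))) := by
      rw [← summable_nat_add_iff 1]
      refine (summ (Dc c) k' hc' hz).congr ?_
      intro n
      simp only [Dc, Nat.add_sub_cancel]
      push_cast
      ring
    rw [h2.tsum_eq_zero_add]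
    simp only [S, Dc, Nat.cast_zero, zero_mul, mul_zero, zero_add, Nat.add_sub_cancel]
    refine tsum_congr ?_
    intro n
    push_cast
    ring
  · intro n y hy
    have hy' : |y| ≤ r := by
      have : |y| < r := by simpa using hy
      exact this.le
    have hn : (0 : ℝ) ≤ n := Nat.cast_nonneg n
    rw [Real.norm_eq_abs, abs_mul, abs_mul, abs_pow, abs_of_nonneg hn]
    rcases n with _ | n
    · simp; positivity
    · have h5 : |y| ^ (n + 1 - 1) ≤ r⁻¹ * r ^ (n + 1) := by
        rw [Nat.add_sub_cancel, pow_succ]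
        have : r⁻¹ * (r ^ n * r) = r ^ n := by field_simp
        rw [this]
        exact pow_le_pow_left₀ (abs_nonneg y) hy' n
      have h6 := hc (n + 1)
      calc |c (n + 1)| * (((n + 1 : ℕ) : ℝ) * |y| ^ (n + 1 - 1))
          ≤ (((n + 1 : ℕ) : ℝ) + 1) ^ k * ((((n + 1 : ℕ) : ℝ) + 1) * (r⁻¹ * r ^ (n + 1))) := by
            gcongr
            linarith
        _ = _ := by ring

/-- hypergeometric coefficients with `c = 1` -/
noncomputable def hc (a b : ℝ) (n : ℕ) : ℝ :=
  (ascPochhammer ℝ n).eval a * (ascPochhammer ℝ n).eval b /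
      (ascPochhammer ℝ n).eval 1 / (Nat.factorial n)

lemma hyp_eq (a b z : ℝ) : hyp2F1 a b 1 z = S (hc a b) z := by
  unfold hyp2F1 S hc
  refine tsum_congr ?_
  intro n
  ring

lemma hc_zero (a b : ℝ) : hc a b 0 = 1 := by simp [hc]

lemma hc_rec (a b : ℝ) (n : ℕ) :
    ((n : ℝ) + 1) ^ 2 * hc a b (n + 1) = (a + n) * (b + n) * hc a b n := by
  have h1 : (ascPochhammer ℝ n).eval (1 : ℝ) ≠ 0 := by
    rw [ascPochhammer_eval_one]; positivity
  have h2 : (Nat.factorial n : ℝ) ≠ 0 := by positivity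
  have h3 : (n : ℝ) + 1 ≠ 0 := by positivity
  have h4 : 1 + (n : ℝ) ≠ 0 := by positivity
  simp only [hc, ascPochhammer_succ_eval, Nat.factorial_succ]
  push_cast
  field_simp
  ring

lemma hc_bd {a b : ℝ} (ha : 0 < a) (hb : 0 < b) (hab : a + b = 1) (n : ℕ) :
    0 ≤ hc a b n ∧ hc a b n ≤ 1 := by
  induction n with
  | zero => simp [hc_zero]
  | succ n ih =>
    have h := hc_rec a b n
    have hn : (0 : ℝ) ≤ n := Nat.cast_nonneg n
    have hp : (0 : ℝ) < ((n : ℝ) + 1) ^ 2 := by positivity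
    have e : hc a b (n + 1) = (a + n) * (b + n) * hc a b n / ((n : ℝ) + 1) ^ 2 := by
      rw [← h]; field_simp
    obtain ⟨i1, i2⟩ := ih
    rw [e]
    refine ⟨by positivity, ?_⟩
    rw [div_le_one hp]
    calc (a + n) * (b + n) * hc a b n ≤ (a + n) * (b + n) * 1 := by gcongr
      _ ≤ _ := by
        have : (a + n) ≤ (n : ℝ) + 1 := by linarith
        have h2 : (b + n) ≤ (n : ℝ) + 1 := by linarith
        rw [mul_one, sq]
        gcongr

lemma Dc_bd {a b : ℝ} (ha : 0 < a) (hb : 0 < b) (hab : a + b = 1) (n : ℕ) :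
    |Dc (hc a b) n| ≤ ((n : ℝ) + 1) ^ 1 := by
  obtain ⟨i1, i2⟩ := hc_bd ha hb hab (n + 1)
  have hn : (0 : ℝ) ≤ n := Nat.cast_nonneg n
  rw [Dc, abs_of_nonneg (by positivity)]
  nlinarith

lemma DDc_bd {a b : ℝ} (ha : 0 < a) (hb : 0 < b) (hab : a + b = 1) (n : ℕ) :
    |Dc (Dc (hc a b)) n| ≤ ((n : ℝ) + 1) ^ 3 := by
  rcases n with _ | n
  · have r0 := hc_rec a b 0
    have r1 := hc_rec a b 1
    obtain ⟨i1, -⟩ := hc_bd ha hb hab 2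
    simp only [hc_zero] at r0
    norm_num at r0 r1
    have e : Dc (Dc (hc a b)) 0 = 2 * hc a b 2 := by norm_num [Dc]
    have hab4 : a * b ≤ 1 / 4 := by nlinarith [sq_nonneg (a - b)]
    have hab0 : 0 < a * b := mul_pos ha hb
    have hb' : (a + 1) * (b + 1) = 2 + a * b := by linear_combination hab
    rw [e, abs_of_nonneg (by positivity)]
    rw [hb', r0] at r1
    norm_num
    nlinarith
  · obtain ⟨i1, i2⟩ := hc_bd ha hb hab (n + 1 + 1 + 1)
    have hn : (0 : ℝ) ≤ n := Nat.cast_nonneg n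
    rw [Dc, Dc, abs_of_nonneg (by positivity)]
    push_cast
    calc ((n : ℝ) + 1 + 1) * (((n : ℝ) + 1 + 1 + 1) * hc a b (n + 1 + 1 + 1))
        ≤ ((n : ℝ) + 1 + 1) * (((n : ℝ) + 1 + 1 + 1) * 1) := by gcongr
      _ ≤ ((n : ℝ) + 1 + 1) * (((n : ℝ) + 1 + 1) ^ 2) := by gcongr; nlinarith
      _ = _ := by ring

lemma hc_bd' {a b : ℝ} (ha : 0 < a) (hb : 0 < b) (hab : a + b = 1) (n : ℕ) :
    |hc a b n| ≤ ((n : ℝ) + 1) ^ 0 := by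
  obtain ⟨i1, i2⟩ := hc_bd ha hb hab n
  rw [abs_of_nonneg i1]; simpa using i2

/-- the hypergeometric differential equation -/
lemma ode {a b : ℝ} (ha : 0 < a) (hb : 0 < b) (hab : a + b = 1) {z : ℝ} (hz : |z| < 1) :
    z * (1 - z) * S (Dc (Dc (hc a b))) z + (1 - 2 * z) * S (Dc (hc a b)) z
      = a * b * S (hc a b) z := by
  have s0 := (summ _ _ (hc_bd' ha hb hab) hz)
  have s1 := (summ _ _ (Dc_bd ha hb hab) hz)
  have s2 := (summ _ _ (DDc_bd ha hb hab) hz)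
  have t0 := s0.hasSum.mul_left (a * b)
  have t1 := s1.hasSum
  have t2 := summ_D _ s1
  have t3 := summ_D _ s2
  have t4 : HasSum (fun n : ℕ => (n : ℝ) * ((n : ℝ) - 1) * hc a b n * z ^ n)
      (z * (z * S (Dc (Dc (hc a b))) z)) := by
    have := t3.mul_left z
    rw [← hasSum_nat_add_iff' 1]
    simp only [range_one, sum_singleton, Nat.cast_zero, zero_mul, sub_zero]
    refine (hasSum_congr fun n => ?_).1 this
    simp only [Dc]
    push_cast
    ring
  have tot := ((t3.sub t4).add t1).sub ((t2.mul_left 2).add t0)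
  have z0 : HasSum (fun _ : ℕ => (0 : ℝ)) 0 := hasSum_zero
  have tot2 := tot.unique (by
    refine (hasSum_congr fun n => ?_).1 z0
    have r := hc_rec a b n
    have hb' : b = 1 - a := by linarith
    simp only [Dc]
    subst hb'
    linear_combination -z ^ n * r)
  simp only [S] at tot2 ⊢
  linarith

lemma S_zero (a b : ℝ) : S (hc a b) 0 = 1 := by
  unfold S
  rw [tsum_eq_single 0]
  · simp [hc_zero]
  · intro n hn; simp [hn]

lemma S_pos {a b : ℝ} (ha : 0 < a) (hb : 0 < b) (hab : a + b = 1) {z : ℝ} (h0 : 0 ≤ z)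
    (h1 : z < 1) : 0 < S (hc a b) z := by
  have s0 := (summ _ _ (hc_bd' ha hb hab) (z := z) (by rwa [abs_of_nonneg h0]))
  have := s0.le_tsum 0 (fun n _ => mul_nonneg (hc_bd ha hb hab n).1 (by positivity))
  simp only [hc_zero, pow_zero, mul_one] at this
  unfold S
  linarith

lemma exists_F {a b : ℝ} (ha : 0 < a) (hb : 0 < b) (hab : a + b = 1) :
    ∃ F F1 : ℝ → ℝ, (∀ z, hyp2F1 a b 1 z = F z) ∧ F 0 = 1 ∧
      (∀ z, 0 ≤ z → z < 1 → 0 < F z) ∧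
      (∀ z, 0 ≤ z → z < 1 → HasDerivAt F (F1 z) z) ∧
      (∀ z, 0 ≤ z → z < 1 → HasDerivAt (fun z => z * (1 - z) * F1 z) (a * b * F z) z) := by
  refine ⟨S (hc a b), S (Dc (hc a b)), hyp_eq a b, S_zero a b,
    fun z h0 h1 => S_pos ha hb hab h0 h1, ?_, ?_⟩
  · intro z h0 h1
    exact deriv_S _ _ _ (hc_bd' ha hb hab) (Dc_bd ha hb hab) (by rwa [abs_of_nonneg h0])
  · intro z h0 h1
    have hz : |z| < 1 := by rwa [abs_of_nonneg h0]
    have d := deriv_S _ _ _ (Dc_bd ha hb hab) (DDc_bd ha hb hab) hz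
    have e := ((hasDerivAt_id z).mul ((hasDerivAt_id z).const_sub 1)).mul d
    refine e.congr_deriv ?_
    rw [← ode ha hb hab hz]
    simp
    ring

noncomputable def u (p : ℝ) : ℝ := 1 - β p
noncomputable def v (p : ℝ) : ℝ := 1 - α p
noncomputable def u1 (p : ℝ) : ℝ :=
  -27 * p * (1 + p) * (1 + 2 * p) * (1 - p) * (2 + p) / (4 * (1 + p + p ^ 2) ^ 4)
noncomputable def v1 (p : ℝ) : ℝ := -6 * (1 + p) ^ 2 * p ^ 2 / (1 + 2 * p) ^ 2
noncomputable def rho (p : ℝ) : ℝ := (1 + 2 * p) / (1 + p + p ^ 2) - 1 / (1 + 2 * p)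
noncomputable def q (p : ℝ) : ℝ := 6 * (1 + 2 * p) / (1 + p + p ^ 2) ^ 2
noncomputable def q1 (p : ℝ) : ℝ :=
  12 / (1 + p + p ^ 2) ^ 2 - 12 * (1 + 2 * p) ^ 2 / (1 + p + p ^ 2) ^ 3
noncomputable def T (p : ℝ) : ℝ :=
  3 * (p ^ 2 * (1 - p) * (1 + p) ^ 2 * (2 + p)) / (1 + p + p ^ 2) ^ 3
noncomputable def T1 (p : ℝ) : ℝ :=
  3 * (2 * p * (1 - p) * (1 + p) ^ 2 * (2 + p) - p ^ 2 * (1 + p) ^ 2 * (2 + p)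
    + 2 * p ^ 2 * (1 - p) * (1 + p) * (2 + p) + p ^ 2 * (1 - p) * (1 + p) ^ 2)
    / (1 + p + p ^ 2) ^ 3
  - 9 * (p ^ 2 * (1 - p) * (1 + p) ^ 2 * (2 + p)) * (1 + 2 * p) / (1 + p + p ^ 2) ^ 4

lemma dN (p : ℝ) : HasDerivAt (fun p : ℝ => 1 + p + p ^ 2) (1 + 2 * p) p := by
  refine HasDerivAt.congr_deriv (((hasDerivAt_id p).const_add 1).add (hasDerivAt_pow 2 p)) ?_
  norm_num

lemma dL (p : ℝ) : HasDerivAt (fun p : ℝ => 1 + 2 * p) 2 p := by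
  refine HasDerivAt.congr_deriv (((hasDerivAt_id p).const_mul 2).const_add 1) ?_
  norm_num

lemma d1 (a p : ℝ) : HasDerivAt (fun p : ℝ => a + p) 1 p := (hasDerivAt_id p).const_add a

lemma du {p : ℝ} (hp : 0 < p) : HasDerivAt u (u1 p) p := by
  have hN : 1 + p + p ^ 2 ≠ 0 := by positivity
  have := ((((hasDerivAt_pow 2 p).const_mul 27).mul ((d1 1 p).pow 2)).div
    (((dN p).pow 3).const_mul 4) (by simp; positivity)).const_sub 1
  refine this.congr_deriv ?_
  simp [u1]
  field_simp
  ring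

lemma dv {p : ℝ} (hp : 0 < p) : HasDerivAt v (v1 p) p := by
  have hN : 1 + 2 * p ≠ 0 := by positivity
  have := (((hasDerivAt_pow 3 p).mul (d1 2 p)).div (dL p) hN).const_sub 1
  refine this.congr_deriv ?_
  simp [v1]
  field_simp
  ring

lemma dq {p : ℝ} (hp : 0 < p) : HasDerivAt q (q1 p) p := by
  have hN : 1 + p + p ^ 2 ≠ 0 := by positivity
  have := ((dL p).const_mul 6).div ((dN p).pow 2) (by simp; positivity)
  refine this.congr_deriv ?_
  simp [q1]
  field_simp
  ring

lemma dT {p : ℝ} (hp : 0 < p) : HasDerivAt T (T1 p) p := by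
  have hN : 1 + p + p ^ 2 ≠ 0 := by positivity
  have := (((((hasDerivAt_pow 2 p).mul ((hasDerivAt_id p).const_sub 1)).mul
    ((d1 1 p).pow 2)).mul (d1 2 p)).const_mul 3).div ((dN p).pow 3) (by simp; positivity)
  refine this.congr_deriv ?_
  simp [T1]
  field_simp
  ring

lemma dγ {p : ℝ} (hp : 0 < p) : HasDerivAt γ (γ p * rho p) p := by
  have hN : 1 + p + p ^ 2 ≠ 0 := by positivity
  have hL : 1 + 2 * p ≠ 0 := by positivity
  have hs : Real.sqrt (1 + 2 * p) ≠ 0 := by positivity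
  have hs2 : Real.sqrt (1 + 2 * p) ^ 2 = 1 + 2 * p := Real.sq_sqrt (by positivity)
  have := (dN p).div ((dL p).sqrt hL) hs
  refine this.congr_deriv ?_
  simp only [γ, rho]
  rw [hs2]
  field_simp
  rw [hs2]
  ring

lemma u_rng {p : ℝ} (h0 : 0 < p) : 0 ≤ u p ∧ u p < 1 := by
  have e : u p = ((1 - p) * (2 + p) * (1 + 2 * p)) ^ 2 / (4 * (1 + p + p ^ 2) ^ 3) := by
    have hN : 1 + p + p ^ 2 ≠ 0 := by positivity
    simp only [u, β]
    field_simp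
    ring
  refine ⟨by rw [e]; positivity, ?_⟩
  have : 0 < β p := by unfold β; positivity
  simp only [u]; linarith

lemma v_eq {p : ℝ} (h0 : 0 < p) : v p = (1 - p) * (1 + p) ^ 3 / (1 + 2 * p) := by
  simp only [v, α]
  field_simp
  ring

lemma v_rng {p : ℝ} (h0 : 0 < p) (h1 : p ≤ 1) : 0 ≤ v p ∧ v p < 1 := by
  have h2 : 0 ≤ 1 - p := by linarith
  refine ⟨by rw [v_eq h0]; positivity, ?_⟩
  have : 0 < α p := by unfold α; positivity
  simp only [v]; linarith

/-- The algebraic heart: the derivative of the Wronskian vanishes. -/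
lemma alg {p : ℝ} (h0 : 0 < p) (f f1 h h1 : ℝ) :
    rho p * (-4 * (u p * (1 - u p) * f1) * h + q p * (v p * (1 - v p) * h1) * f - T p * (f * h))
    + (-4 * (2 / 9 * f * u1 p) * h - 4 * (u p * (1 - u p) * f1) * (h1 * v1 p)
      + q1 p * (v p * (1 - v p) * h1) * f + q p * (1 / 4 * h * v1 p) * f
      + q p * (v p * (1 - v p) * h1) * (f1 * u1 p)
      - T1 p * (f * h) - T p * (f1 * u1 p * h) - T p * (f * (h1 * v1 p))) = 0 := by
  have hN : 1 + p + p ^ 2 ≠ 0 := by positivity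
  have hL : 1 + 2 * p ≠ 0 := by positivity
  simp only [rho, u, v, α, β, q, q1, T, T1, u1, v1]
  field_simp
  ring

/-- Vanishing Wronskian gives proportionality. -/
lemma alg2 {p : ℝ} (h0 : 0 < p) (h2 : p < 1) (f f1 h h1 : ℝ)
    (H : -4 * (u p * (1 - u p) * f1) * h + q p * (v p * (1 - v p) * h1) * f - T p * (f * h) = 0) :
    f1 * u1 p * h - f * (rho p * h + h1 * v1 p) = 0 := by
  have hN : 1 + p + p ^ 2 ≠ 0 := by positivity
  have hL : 1 + 2 * p ≠ 0 := by positivity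
  have h3 : 0 < 1 - p := by linarith
  have hP : (1 - p) * (1 + p) * p * (2 + p) * (1 + 2 * p) / (1 + p + p ^ 2) ^ 2 ≠ 0 := by
    positivity
  refine (mul_eq_zero.1 ?_).resolve_left hP
  rw [← H]
  simp only [rho, u, v, α, β, q, T, u1, v1]
  field_simp
  ring

end RBBGaux

open RBBGaux in
/-- Corollary (5.21) of Berndt–Bhargava–Garvan. -/
theorem RBBG_corollary (p : ℝ) (hp0 : 0 < p) (hp1 : p < 1) :
    Real.sqrt 3 * hyp2F1 (1/3) (2/3) 1 (1 - β p) =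
      γ p * hyp2F1 (1/2) (1/2) 1 (1 - α p) := by
  obtain ⟨F, F1, hF, F0, -, dF, dφ⟩ := exists_F (a := 1/3) (b := 2/3) (by norm_num) (by norm_num)
    (by norm_num)
  obtain ⟨G, G1, hG, G0, Gpos, dG, dψ⟩ := exists_F (a := 1/2) (b := 1/2) (by norm_num)
    (by norm_num) (by norm_num)
  rw [hF, hG]
  have hu : ∀ x : ℝ, 0 < x → HasDerivAt (fun x => F (u x)) (F1 (u x) * u1 x) x := fun x hx =>
    (dF _ (u_rng hx).1 (u_rng hx).2).comp x (du hx)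
  have hv : ∀ x : ℝ, 0 < x → x ≤ 1 → HasDerivAt (fun x => G (v x)) (G1 (v x) * v1 x) x :=
    fun x hx hx1 => (dG _ (v_rng hx hx1).1 (v_rng hx hx1).2).comp x (dv hx)
  have hφ : ∀ x : ℝ, 0 < x → HasDerivAt (fun x => u x * (1 - u x) * F1 (u x))
      (1/3 * (2/3) * F (u x) * u1 x) x := fun x hx =>
    (dφ _ (u_rng hx).1 (u_rng hx).2).comp x (du hx)
  have hψ : ∀ x : ℝ, 0 < x → x ≤ 1 → HasDerivAt (fun x => v x * (1 - v x) * G1 (v x))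
      (1/2 * (1/2) * G (v x) * v1 x) x := fun x hx hx1 =>
    (dψ _ (v_rng hx hx1).1 (v_rng hx hx1).2).comp x (dv hx)
  have γpos : ∀ x : ℝ, 0 < x → 0 < γ x := fun x hx => by unfold γ; positivity
  have u_one : u 1 = 0 := by norm_num [u, β]
  have v_one : v 1 = 0 := by norm_num [v, α]
  have T_one : T 1 = 0 := by norm_num [T]
  let E : ℝ → ℝ := fun x => -4 * (u x * (1 - u x) * F1 (u x)) * G (v x)
    + q x * (v x * (1 - v x) * G1 (v x)) * F (u x) - T x * (F (u x) * G (v x))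
  have dW : ∀ x : ℝ, 0 < x → x ≤ 1 → HasDerivAt (fun x => γ x * E x) 0 x := by
    intro x hx hx1
    have := (dγ hx).mul ((((((hφ x hx).const_mul (-4)).mul (hv x hx hx1))).add
      (((dq hx).mul (hψ x hx hx1)).mul (hu x hx))).sub ((dT hx).mul ((hu x hx).mul (hv x hx hx1))))
    refine this.congr_deriv ?_
    simp only [Pi.mul_apply, Pi.add_apply, Pi.sub_apply]
    have a := alg hx (F (u x)) (F1 (u x)) (G (v x)) (G1 (v x))
    linear_combination γ x * a
  have hE : ∀ x : ℝ, 0 < x → x < 1 → E x = 0 := by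
    intro x hx hx1
    obtain ⟨c, hc, hc2⟩ := exists_hasDerivAt_eq_slope (fun x => γ x * E x) (fun _ => 0) hx1
      (fun y hy => (dW y (by linarith [hy.1]) hy.2).continuousAt.continuousWithinAt)
      (fun y hy => dW y (by linarith [hy.1]) hy.2.le)
    have h3 : 1 - x ≠ 0 := by linarith
    have E1 : E 1 = 0 := by simp [E, u_one, v_one, T_one]
    rw [E1, eq_div_iff h3] at hc2
    have : γ x * E x = 0 := by linarith
    exact (mul_eq_zero.1 this).resolve_left (γpos x hx).ne'
  have hne : ∀ x : ℝ, 0 < x → x ≤ 1 → γ x * G (v x) ≠ 0 := fun x hx hx1 =>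
    (mul_pos (γpos x hx) (Gpos _ (v_rng hx hx1).1 (v_rng hx hx1).2)).ne'
  have dR := fun (x : ℝ) (hx : 0 < x) (hx1 : x ≤ 1) =>
    (hu x hx).div ((dγ hx).mul (hv x hx hx1)) (hne x hx hx1)
  obtain ⟨c, hc, hc2⟩ := exists_hasDerivAt_eq_slope _ _ hp1
      (fun y hy => (dR y (by linarith [hy.1]) hy.2).continuousAt.continuousWithinAt)
      (fun y hy => dR y (by linarith [hy.1]) hy.2.le)
  have hcp : 0 < c := by linarith [hc.1]
  have a2 := alg2 hcp hc.2 _ _ _ _ (hE c hcp hc.2)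
  have h3 : 1 - p ≠ 0 := by linarith
  have num : F1 (u c) * u1 c * (γ c * G (v c))
      - F (u c) * (γ c * rho c * G (v c) + γ c * (G1 (v c) * v1 c)) = 0 := by
    linear_combination γ c * a2
  simp only [Pi.div_apply, Pi.mul_apply] at hc2
  rw [num, zero_div, eq_div_iff h3, zero_mul, u_one, v_one, F0, G0] at hc2
  have g1 : γ 1 = Real.sqrt 3 := by
    have : (1 : ℝ) + 2 * 1 = 3 := by norm_num
    rw [γ, this, div_eq_iff (by positivity), Real.mul_self_sqrt (by norm_num)]
    norm_num
  rw [g1, mul_one] at hc2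
  have hs : Real.sqrt 3 ≠ 0 := by positivity
  have hp := hne p hp0 hp1.le
  change Real.sqrt 3 * F (u p) = γ p * G (v p)
  have : F (u p) / (γ p * G (v p)) = 1 / Real.sqrt 3 := by linarith
  rw [div_eq_div_iff hp hs] at this
  linarith
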